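/- Let N ≥ 1, m ≥ 1, let y_1, …, y_m ∈ ℝ^N be pairwise distinct, let Q : ℝ^N → ℝ and M ∈ ℝ satisfy: Q(x) ≤ M for all x, Q(−y_i) = M for all i = 1, …, m, and whenever Q(x) = M there exists i with x = −y_i. Then for every ξ ∈ ℝ^N with ξ ≠ 0 there exists an index ℓ ∈ {1, …, m} such that Q(ξ − y_ℓ) < Q(−y_ℓ). -/

import Mathlib

/-!
A nonempty finite set is not invariant under a nonzero translation. If no index `ℓ` worked, then
every `ξ - y ℓ` would be a maximum point of `Q`, so translation by `ξ` would map the finite set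
`{-y 1, …, -y m}` injectively into itself and hence permute it. Comparing the sums of the points
before and after the translation gives `m • ξ = 0`, so `ξ = 0`.
-/

theorem stmt_17 (N m : ℕ) (hN : 1 ≤ N) (hm : 1 ≤ m)
    (y : Fin m → EuclideanSpace ℝ (Fin N)) (hy : Function.Injective y)
    (Q : EuclideanSpace ℝ (Fin N) → ℝ) (M : ℝ)
    (hub : ∀ x, Q x ≤ M)
    (hmax : ∀ i : Fin m, Q (-(y i)) = M)
    (hchar : ∀ x, Q x = M → ∃ i : Fin m, x = -(y i)) :
    ∀ ξ : EuclideanSpace ℝ (Fin N), ξ ≠ 0 →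
      ∃ ℓ : Fin m, Q (ξ - y ℓ) < Q (-(y ℓ)) := by
  intro ξ hξ
  by_contra! h
  have hshift : ∀ l, ∃ i, ξ - y l = -(y i) := fun l =>
    hchar _ (le_antisymm (hub _) ((hmax l).symm.trans_le (h l)))
  choose f hf using hshift
  have hinj : Function.Injective f := fun a b hab => by
    have h1 : ξ - y a = ξ - y b := by rw [hf a, hf b, hab]
    exact hy (sub_right_injective h1)
  have hperm : ∑ l, y (f l) = ∑ l, y l :=
    (Finite.injective_iff_bijective.mp hinj).sum_comp y
  have hsum : ∑ l, (ξ - y l) = ∑ l, -(y (f l)) := Finset.sum_congr rfl fun l _ => hf l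
  rw [Finset.sum_sub_distrib, Finset.sum_neg_distrib, hperm, sub_eq_neg_self,
    Finset.sum_const, Finset.card_univ, Fintype.card_fin, ← Nat.cast_smul_eq_nsmul ℝ] at hsum
  rcases smul_eq_zero.mp hsum with h0 | h0
  · have : m = 0 := by exact_mod_cast h0
    omega
  · exact hξ h0
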